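/- arXiv:1306.2697 — 4 statements merged into one kernel-verified Lean document; each statement's English description precedes it below -/
import Mathlib

section
/- Let X and Y be two sets, S ⊆ X × D(Y) a relation, μ ∈ D(X) a distribution, and ψ ∈ D(D(Y)) a distribution over distributions. If μ S̿ ψ (double lifting) then μ S̄ π(ψ) (single lifting of the flattening). -/
open scoped ENNReal

namespace PCKA

/-- A probabilistic automaton over the (non-silent) action alphabet `α`, with state
space `σ`.  Transition labels are `Option α`, where `none` plays the role of the
silent action `τ`; `trans x a μ` means `x —a→ μ` where `μ` is a (countably
supported) probability distribution over states, `init` is the initial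
distribution and `final` the set of final states. -/
structure PAut (α : Type) (σ : Type) where
  trans : σ → Option α → PMF σ → Prop
  init : PMF σ
  final : Set σ

/-- The lifting `S̄ ⊆ D(X) × D(Y)` of a relation `S ⊆ X × D(Y)`: `μ S̄ ν` iff there
are weights `p n` summing to `1`, states `x n` and distributions `νs n` with
`μ = Σ_n p n · δ_{x n}`, `x n S νs n` for each `n`, and `ν = Σ_n p n · νs n`. -/
def Lift {X Y : Type} (S : X → PMF Y → Prop) (μ : PMF X) (ν : PMF Y) : Prop :=
  ∃ (p : ℕ → ℝ≥0∞) (x : ℕ → X) (νs : ℕ → PMF Y),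
    (∑' n, p n) = 1 ∧
    (∀ s, μ s = ∑' n, p n * (PMF.pure (x n)) s) ∧
    (∀ n, S (x n) (νs n)) ∧
    (∀ t, ν t = ∑' n, p n * (νs n) t)

/-- The double lifting `T̿ ⊆ D(X) × D(Z)` of a relation `T ⊆ X × Z`, via a weight
function `w`. -/
def DLift {X Z : Type} (T : X → Z → Prop) (μ : PMF X) (ψ : PMF Z) : Prop :=
  ∃ w : X → Z → ℝ≥0∞,
    (∀ x z, 0 < w x z → T x z) ∧
    (∀ x, (∑' z, w x z) = μ x) ∧
    (∀ z, (∑' x, w x z) = ψ z)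

/-- Flattening `π : D(D(Y)) → D(Y)`, `π(ψ) = Σ_{ν} ψ(ν)·ν`. -/
noncomputable def flat {Y : Type} (ψ : PMF (PMF Y)) : PMF Y := ψ.bind id

/-- Single transition step, with the τ-transitions extended by reflexivity
(`x —τ→ δ_x` is always allowed). -/
def step {α σ : Type} (P : PAut α σ) (a : Option α) (x : σ) (μ : PMF σ) : Prop :=
  P.trans x a μ ∨ (a = none ∧ μ = PMF.pure x)

/-- Weak internal moves `⇒`: the reflexive-transitive closure of the lifted
(extended) τ-transition relation on distributions. -/
def WeakTau {α σ : Type} (P : PAut α σ) : PMF σ → PMF σ → Prop :=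
  Relation.ReflTransGen (Lift (step P none))

/-- Weak `a`-transition `μ ⇒^a μ'`: `μ ⇒ μ₁ —ā→ μ₂ ⇒ μ'`. -/
def WeakStep {α σ : Type} (P : PAut α σ) (a : Option α) (μ μ' : PMF σ) : Prop :=
  ∃ μ₁ μ₂, WeakTau P μ μ₁ ∧ Lift (step P a) μ₁ μ₂ ∧ WeakTau P μ₂ μ'

/-- A probabilistic simulation from `P` to `Q` (Deng et al. style). -/
structure IsSimulation {α σ τ' : Type} (P : PAut α σ) (Q : PAut α τ')
    (S : σ → PMF τ' → Prop) : Prop where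
  init : ∃ ν₀', WeakTau Q Q.init ν₀' ∧ Lift S P.init ν₀'
  step : ∀ x a μ', P.trans x a μ' → ∀ ν, S x ν →
    ∃ ν', WeakStep Q a ν ν' ∧ Lift S μ' ν'
  final : ∀ x ν, x ∈ P.final → S x ν →
    ∃ ν', WeakTau Q ν ν' ∧ ∀ y ∈ ν'.support, y ∈ Q.final

/-- A probabilistic weak forward simulation from `P` to `Q` (Segala style). -/
structure IsWFSimulation {α σ τ' : Type} (P : PAut α σ) (Q : PAut α τ')
    (S : σ → PMF τ' → Prop) : Prop where
  init : ∃ ψ₀ : PMF (PMF τ'), DLift S P.init ψ₀ ∧ WeakTau Q Q.init (flat ψ₀)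
  step : ∀ x a μ', P.trans x a μ' → ∀ ν, S x ν →
    ∃ ψ : PMF (PMF τ'), WeakStep Q a ν (flat ψ) ∧ DLift S μ' ψ
  final : ∀ x ν, x ∈ P.final → S x ν →
    ∃ ψ : PMF (PMF τ'), (∀ ρ ∈ ψ.support, ∀ y ∈ ρ.support, y ∈ Q.final) ∧
      WeakTau Q ν (flat ψ)

/-- `P ≤ Q`: there exists a probabilistic simulation from `P` to `Q`. -/
def Sim {α σ τ' : Type} (P : PAut α σ) (Q : PAut α τ') : Prop :=
  ∃ S, IsSimulation P Q S

/-- Simulation equivalence `P ≡ Q`. -/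
def SimEquiv {α σ τ' : Type} (P : PAut α σ) (Q : PAut α τ') : Prop :=
  Sim P Q ∧ Sim Q P

/-- Convex combination `p·μ + (1−p)·ν` of two distributions. -/
noncomputable def mix {X : Type} (p : ℝ≥0∞) (hp : p ≤ 1) (μ ν : PMF X) : PMF X :=
  ⟨fun x => p * μ x + (1 - p) * ν x, by
    refine ENNReal.summable.hasSum_iff.mpr ?_
    rw [ENNReal.tsum_add, ENNReal.tsum_mul_left, ENNReal.tsum_mul_left,
      μ.tsum_coe, ν.tsum_coe, mul_one, mul_one, add_tsub_cancel_of_le hp]⟩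

/-- Product distribution `μ × ν`, with `(μ × ν)(x,y) = μ(x)·ν(y)`. -/
noncomputable def pprod {X Y : Type} (μ : PMF X) (ν : PMF Y) : PMF (X × Y) :=
  μ.bind fun x => ν.map fun y => (x, y)

/-- The skip automaton `1`: one state, no transitions, that state is final. -/
noncomputable def skip (α : Type) : PAut α Unit :=
  ⟨fun _ _ _ => False, PMF.pure (), Set.univ⟩

/-- The deadlock automaton `0`: one state, no transitions, no final state. -/
noncomputable def deadlock (α : Type) : PAut α Unit :=
  ⟨fun _ _ _ => False, PMF.pure (), ∅⟩

/-- Nondeterministic choice `P + Q`: disjoint union of the two automata (realised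
by the sum type) plus a fresh initial state `z = none` with `z —τ→ μ₀` and
`z —τ→ ν₀`. -/
noncomputable def nchoice {α σ τ' : Type} (P : PAut α σ) (Q : PAut α τ') :
    PAut α (Option (σ ⊕ τ')) where
  trans := fun s a μ =>
    match s with
    | none => a = none ∧
        (μ = P.init.map (fun x => some (Sum.inl x)) ∨
         μ = Q.init.map (fun y => some (Sum.inr y)))
    | some (Sum.inl x) => ∃ μ', P.trans x a μ' ∧ μ = μ'.map (fun x => some (Sum.inl x))
    | some (Sum.inr y) => ∃ ν', Q.trans y a ν' ∧ μ = ν'.map (fun y => some (Sum.inr y))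
  init := PMF.pure none
  final := {s | (∃ x ∈ P.final, s = some (Sum.inl x)) ∨ (∃ y ∈ Q.final, s = some (Sum.inr y))}

/-- Sequential composition `P · Q`: disjoint union (realised by the sum type),
with a τ-transition from each final state of `P` to the initial distribution of
`Q`; initial distribution that of `P`, final states those of `Q`. -/
noncomputable def pseq {α σ τ' : Type} (P : PAut α σ) (Q : PAut α τ') :
    PAut α (σ ⊕ τ') where
  trans := fun s a μ =>
    match s with
    | Sum.inl x =>
        (∃ μ', P.trans x a μ' ∧ μ = μ'.map Sum.inl) ∨
        (a = none ∧ x ∈ P.final ∧ μ = Q.init.map Sum.inr)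
    | Sum.inr y => ∃ ν', Q.trans y a ν' ∧ μ = ν'.map Sum.inr
  init := P.init.map Sum.inl
  final := {s | ∃ y ∈ Q.final, s = Sum.inr y}

/-- Kleene star `P*`: a fresh state `z = none` which is initial and the only
final state, with `z —τ→ μ₀` and `x —τ→ δ_z` for each final state `x` of `P`. -/
noncomputable def pstar {α σ : Type} (P : PAut α σ) : PAut α (Option σ) where
  trans := fun s a μ =>
    match s with
    | none => a = none ∧ μ = P.init.map some
    | some x =>
        (∃ μ', P.trans x a μ' ∧ μ = μ'.map some) ∨
        (a = none ∧ x ∈ P.final ∧ μ = PMF.pure none)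
  init := PMF.pure none
  final := {none}

/-- Probabilistic choice `P ⊕_p Q`: disjoint union with initial distribution
`p·μ₀ + (1−p)·ν₀`. -/
noncomputable def pchoice {α σ τ' : Type} (p : ℝ≥0∞) (hp : p ≤ 1)
    (P : PAut α σ) (Q : PAut α τ') : PAut α (σ ⊕ τ') where
  trans := fun s a μ =>
    match s with
    | Sum.inl x => ∃ μ', P.trans x a μ' ∧ μ = μ'.map Sum.inl
    | Sum.inr y => ∃ ν', Q.trans y a ν' ∧ μ = ν'.map Sum.inr
  init := mix p hp (P.init.map Sum.inl) (Q.init.map Sum.inr)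
  final := {s | (∃ x ∈ P.final, s = Sum.inl x) ∨ (∃ y ∈ Q.final, s = Sum.inr y)}

/-- CSP-style parallel composition `P ∥_A Q` synchronising on the frame `A`:
actions in `A` must be performed jointly, all other actions (including τ) are
interleaved. -/
noncomputable def par {α σ τ' : Type} (A : Set α) (P : PAut α σ) (Q : PAut α τ') :
    PAut α (σ × τ') where
  trans := fun s a μπ => ∃ μ ν, μπ = pprod μ ν ∧
    ((∃ b ∈ A, a = some b ∧ P.trans s.1 a μ ∧ Q.trans s.2 a ν) ∨
     ((∀ b ∈ A, a ≠ some b) ∧ P.trans s.1 a μ ∧ ν = PMF.pure s.2) ∨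
     ((∀ b ∈ A, a ≠ some b) ∧ Q.trans s.2 a ν ∧ μ = PMF.pure s.1))
  init := pprod P.init Q.init
  final := {s | s.1 ∈ P.final ∧ s.2 ∈ Q.final}

/-- Sums over the countable support of `w` can be reindexed along `ℕ`. -/
theorem exists_nat_enum {I : Type} (w : I → ℝ≥0∞) (hw : (∑' i, w i) = 1) :
    ∃ (p : ℕ → ℝ≥0∞) (e : ℕ → I), (∀ n, 0 < w (e n)) ∧
      ∀ g : I → ℝ≥0∞, (∑' n, p n * g (e n)) = ∑' i, w i * g i := by
  have hc : (Function.support w).Countable :=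
    Summable.countable_support_ennreal (by rw [hw]; exact ENNReal.one_ne_top)
  have hne : ∃ i, w i ≠ 0 := by
    by_contra hcon
    push Not at hcon
    simp [hcon] at hw
  obtain ⟨i₀, hi₀⟩ := hne
  have : Countable (Function.support w) := hc.to_subtype
  obtain ⟨f, hf⟩ := exists_injective_nat (Function.support w)
  let q : ℕ → Function.support w := Function.extend f id (fun _ => ⟨i₀, hi₀⟩)
  have hq : ∀ a, q (f a) = a := fun a => by simp [q, hf.extend_apply]
  let p : ℕ → ℝ≥0∞ := Function.extend f (fun a => w a) 0
  have hp : ∀ a, p (f a) = w a := fun a => by simp [p, hf.extend_apply]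
  refine ⟨p, fun n => (q n : I), fun n => pos_iff_ne_zero.mpr (q n).2, fun g => ?_⟩
  rw [← hf.tsum_eq, ← (Subtype.val_injective (p := (· ∈ Function.support w))).tsum_eq]
  · exact tsum_congr fun a => by simp only [hp, hq]
  · intro i hi
    refine ⟨⟨i, ?_⟩, rfl⟩
    exact left_ne_zero_of_mul hi
  · intro n hn
    by_contra hcon
    apply left_ne_zero_of_mul hn
    exact Function.extend_apply' _ _ _ hcon

/-- if `μ S̿ ψ` (double lifting) then `μ S̄ π(ψ)` (single lifting of
the flattening). -/
theorem dlift_to_lift_flat {X Y : Type} (S : X → PMF Y → Prop)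
    (μ : PMF X) (ψ : PMF (PMF Y)) (h : DLift S μ ψ) :
    Lift S μ (flat ψ) := by
  obtain ⟨w, hS, hμ, hψ⟩ := h
  have hw : (∑' i : X × PMF Y, w i.1 i.2) = 1 := by
    rw [ENNReal.tsum_prod', ← μ.tsum_coe]
    exact tsum_congr hμ
  obtain ⟨p, e, he, hsum⟩ := exists_nat_enum (fun i : X × PMF Y => w i.1 i.2) hw
  refine ⟨p, fun n => (e n).1, fun n => (e n).2, ?_, fun s => ?_,
    fun n => hS _ _ (he n), fun t => ?_⟩
  · have := hsum (fun _ => 1)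
    simpa [hw] using this
  · rw [hsum (fun i => PMF.pure i.1 s), ENNReal.tsum_prod']
    simp only [ENNReal.tsum_mul_right, hμ]
    rw [tsum_eq_single s]
    · simp
    · intro x hx
      simp [PMF.pure_apply, hx.symm]
  · rw [hsum (fun i => i.2 t), ENNReal.tsum_prod', ENNReal.tsum_comm]
    simp only [ENNReal.tsum_mul_right, hψ]
    simp [flat, PMF.bind_apply]

end PCKA
end

section
/- A relation S ⊆ P × D(Q) between a probabilistic automaton P and distributions over a probabilistic automaton Q is a probabilistic simulation if and only if it is a probabilistic weak forward simulation. -/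
open scoped ENNReal

namespace PCKA

theorem exists_pmf_of_tsum {C : Type} (f : C → ℝ≥0∞) (h : ∑' c, f c = 1) :
    ∃ q : PMF C, ∀ c, q c = f c :=
  ⟨⟨f, h ▸ ENNReal.summable.hasSum⟩, fun _ => rfl⟩

theorem lift_iff_pmf {X Y : Type} (S : X → PMF Y → Prop) (μ : PMF X) (ν : PMF Y) :
    Lift S μ ν ↔ ∃ (q : PMF ℕ) (x : ℕ → X) (νs : ℕ → PMF Y),
      μ = q.map x ∧ (∀ n, S (x n) (νs n)) ∧ ν = q.bind νs := by
  constructor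
  · rintro ⟨p, x, νs, hp, hμ, hS, hν⟩
    obtain ⟨q, hq⟩ := exists_pmf_of_tsum p hp
    refine ⟨q, x, νs, ?_, hS, ?_⟩
    · ext s
      rw [hμ s, ← PMF.bind_pure_comp, PMF.bind_apply]
      simp only [hq, Function.comp_apply]
    · ext t
      rw [hν t, PMF.bind_apply]
      simp only [hq]
  · rintro ⟨q, x, νs, hμ, hS, hν⟩
    refine ⟨q, x, νs, q.tsum_coe, ?_, hS, ?_⟩
    · intro s
      rw [hμ, ← PMF.bind_pure_comp, PMF.bind_apply]
      rfl
    · intro t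
      rw [hν, PMF.bind_apply]

theorem map_fst_apply {X Z : Type} (j : PMF (X × Z)) (x : X) :
    j.map Prod.fst x = ∑' z, j (x, z) := by
  classical
  rw [PMF.map_apply, ENNReal.tsum_prod', tsum_eq_single x]
  · simp
  · intro b hb
    simp [hb.symm]

theorem map_snd_apply {X Z : Type} (j : PMF (X × Z)) (z : Z) :
    j.map Prod.snd z = ∑' x, j (x, z) := by
  classical
  rw [PMF.map_apply, ENNReal.tsum_prod']
  refine tsum_congr fun x => ?_
  rw [tsum_eq_single z]
  · simp
  · intro b hb
    simp [hb.symm]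

theorem dlift_iff_pmf {X Z : Type} (T : X → Z → Prop) (μ : PMF X) (ψ : PMF Z) :
    DLift T μ ψ ↔ ∃ j : PMF (X × Z),
      (∀ c ∈ j.support, T c.1 c.2) ∧ μ = j.map Prod.fst ∧ ψ = j.map Prod.snd := by
  constructor
  · rintro ⟨w, hT, hμ, hψ⟩
    have h1 : ∑' c : X × Z, w c.1 c.2 = 1 := by
      rw [ENNReal.tsum_prod']
      simp only [hμ, μ.tsum_coe]
    obtain ⟨j, hj⟩ := exists_pmf_of_tsum _ h1
    refine ⟨j, ?_, ?_, ?_⟩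
    · intro c hc
      rw [PMF.mem_support_iff, hj] at hc
      exact hT _ _ (pos_iff_ne_zero.mpr hc)
    · ext x
      rw [map_fst_apply, ← hμ]
      simp only [hj]
    · ext z
      rw [map_snd_apply, ← hψ]
      simp only [hj]
  · rintro ⟨j, hT, rfl, rfl⟩
    refine ⟨fun x z => j (x, z), ?_, ?_, ?_⟩
    · intro x z h
      exact hT (x, z) ((PMF.mem_support_iff _ _).mpr h.ne')
    · intro x
      rw [map_fst_apply]
    · intro z
      rw [map_snd_apply]

/-- Every distribution is the image of one on `ℕ` along a map into its support. -/
theorem exists_nat_pmf {C : Type} (j : PMF C) :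
    ∃ (q : PMF ℕ) (d : ℕ → C), (∀ n, d n ∈ j.support) ∧ q.map d = j := by
  classical
  obtain ⟨d, hd⟩ := j.support_countable.exists_eq_range j.support_nonempty
  have hmem : ∀ n, d n ∈ j.support := fun n => hd ▸ Set.mem_range_self n
  have hinv : ∀ c, ∃ n, c ∈ j.support → d n = c := by
    intro c
    by_cases hc : c ∈ j.support
    · have hc' := hc
      rw [hd] at hc'
      obtain ⟨n, hn⟩ := hc'
      exact ⟨n, fun _ => hn⟩
    · exact ⟨0, fun h => absurd h hc⟩
  choose e he using hinv
  refine ⟨j.map e, d, hmem, ?_⟩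
  rw [PMF.map_comp]
  conv_rhs => rw [← j.bind_pure]
  rw [← PMF.bind_pure_comp]
  ext c
  rw [PMF.bind_apply, PMF.bind_apply]
  refine tsum_congr fun a => ?_
  by_cases ha : a ∈ j.support
  · simp [he a ha]
  · rw [PMF.mem_support_iff, not_not] at ha
    simp [ha]

theorem lift_iff_dlift {X Y : Type} (S : X → PMF Y → Prop) (μ : PMF X) (ν : PMF Y) :
    Lift S μ ν ↔ ∃ ψ : PMF (PMF Y), DLift S μ ψ ∧ flat ψ = ν := by
  rw [lift_iff_pmf]
  constructor
  · rintro ⟨q, x, νs, rfl, hS, rfl⟩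
    refine ⟨q.map νs, (dlift_iff_pmf _ _ _).mpr
      ⟨q.map fun n => (x n, νs n), ?_, ?_, ?_⟩, ?_⟩
    · intro c hc
      rw [PMF.support_map] at hc
      obtain ⟨n, -, rfl⟩ := hc
      exact hS n
    · rw [PMF.map_comp]; rfl
    · rw [PMF.map_comp]; rfl
    · rw [flat, PMF.bind_map]; rfl
  · rintro ⟨ψ, hψ, rfl⟩
    obtain ⟨j, hT, rfl, rfl⟩ := (dlift_iff_pmf _ _ _).mp hψ
    obtain ⟨q, d, hd, rfl⟩ := exists_nat_pmf j
    refine ⟨q, fun n => (d n).1, fun n => (d n).2, ?_, fun n => hT _ (hd n), ?_⟩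
    · rw [PMF.map_comp]; rfl
    · rw [flat, PMF.map_comp, PMF.bind_map]; rfl

/-- a relation `S ⊆ P × D(Q)` is a probabilistic simulation iff it
is a probabilistic weak forward simulation. -/
theorem isSimulation_iff_isWFSimulation {α σ τ' : Type}
    (P : PAut α σ) (Q : PAut α τ') (S : σ → PMF τ' → Prop) :
    IsSimulation P Q S ↔ IsWFSimulation P Q S := by
  constructor
  · intro h
    refine ⟨?_, ?_, ?_⟩
    · obtain ⟨ν, h1, h2⟩ := h.init
      obtain ⟨ψ, h3, rfl⟩ := (lift_iff_dlift _ _ _).mp h2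
      exact ⟨ψ, h3, h1⟩
    · intro x a μ' ht ν hS
      obtain ⟨ν', h1, h2⟩ := h.step x a μ' ht ν hS
      obtain ⟨ψ, h3, rfl⟩ := (lift_iff_dlift _ _ _).mp h2
      exact ⟨ψ, h1, h3⟩
    · intro x ν hx hS
      obtain ⟨ν', h1, h2⟩ := h.final x ν hx hS
      refine ⟨PMF.pure ν', ?_, ?_⟩
      · intro ρ hρ
        rw [PMF.support_pure, Set.mem_singleton_iff] at hρ
        subst hρ
        exact h2
      · rw [flat, PMF.pure_bind]
        exact h1
  · intro h
    refine ⟨?_, ?_, ?_⟩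
    · obtain ⟨ψ, h1, h2⟩ := h.init
      exact ⟨flat ψ, h2, (lift_iff_dlift _ _ _).mpr ⟨ψ, h1, rfl⟩⟩
    · intro x a μ' ht ν hS
      obtain ⟨ψ, h1, h2⟩ := h.step x a μ' ht ν hS
      exact ⟨flat ψ, h1, (lift_iff_dlift _ _ _).mpr ⟨ψ, h2, rfl⟩⟩
    · intro x ν hx hS
      obtain ⟨ψ, h1, h2⟩ := h.final x ν hx hS
      refine ⟨flat ψ, h2, ?_⟩
      intro y hy
      rw [flat, PMF.mem_support_bind_iff] at hy
      obtain ⟨ρ, hρ, hy⟩ := hy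
      exact h1 ρ hρ y hy

end PCKA
end

section
/- Probabilistic simulation is a precongruence for nondeterministic choice, probabilistic choice and parallel composition: for probabilistic automata P, Q, R with disjoint state spaces, if P ≤ Q then P + R ≤ Q + R, P ⊕_p R ≤ Q ⊕_p R for every p ∈ [0,1], and P ∥_A R ≤ Q ∥_A R for every frame set A of external actions; the same holds when the order of the arguments is reversed. -/
open scoped ENNReal

namespace PCKA

theorem lift_of_pmf {ι X Y : Type} {S : X → PMF Y → Prop} (w : PMF ι) (x : ι → X)
    (νs : ι → PMF Y) (h : ∀ i ∈ w.support, S (x i) (νs i)) :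
    Lift S (w.map x) (w.bind νs) := by
  classical
  have hc : Countable w.support := w.support_countable.to_subtype
  have : Nonempty w.support := w.support_nonempty.to_subtype
  obtain ⟨e, he⟩ := exists_injective_nat w.support
  let d : ℕ → w.support := Function.invFun e
  have inv : ∀ i : w.support, d (e i) = i := Function.leftInverse_invFun he
  -- sums over `ℕ` concentrated on the range of the encoding
  have key : ∀ F : ι → ℝ≥0∞,
      (∑' n, (if n ∈ Set.range e then w (d n).1 else 0) *
        F (d n).1) = ∑' i, w i * F i := by
    intro F
    have h1 : (∑' i : w.support, w i * F i) = ∑' i, w i * F i := by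
      apply tsum_subtype_eq_of_support_subset (f := fun i => w i * F i)
      intro i hi
      rw [PMF.mem_support_iff]
      intro h0
      simp [h0] at hi
    rw [← h1]
    have h2 := he.tsum_eq (f := fun n => (if n ∈ Set.range e then w (d n).1 else 0) *
        F (d n).1) (by
      intro n hn
      by_contra hc
      simp only [Function.mem_support, if_neg hc, zero_mul, ne_eq, not_true_eq_false] at hn)
    rw [← h2]
    refine tsum_congr fun i => ?_
    simp [inv]
  refine ⟨fun n => if n ∈ Set.range e then w (d n).1 else 0,
    fun n => x (d n).1, fun n => νs (d n).1, ?_, ?_, ?_, ?_⟩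
  · have := key (fun _ => 1)
    simpa [w.tsum_coe] using this
  · intro s
    rw [key (fun i => PMF.pure (x i) s), PMF.map, PMF.bind_apply]
    rfl
  · intro n
    exact h _ (d n).2
  · intro t
    rw [key (fun i => νs i t), PMF.bind_apply]

theorem lift_pmf {X Y : Type} {S : X → PMF Y → Prop} {μ : PMF X} {ν : PMF Y}
    (h : Lift S μ ν) : ∃ (w : PMF ℕ) (x : ℕ → X) (νs : ℕ → PMF Y),
      (∀ n, S (x n) (νs n)) ∧ μ = w.map x ∧ ν = w.bind νs := by
  obtain ⟨p, x, νs, hp, hμ, hS, hν⟩ := h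
  obtain ⟨w, hw⟩ : ∃ w : PMF ℕ, ∀ n, w n = p n :=
    ⟨⟨p, ENNReal.summable.hasSum_iff.mpr hp⟩, fun _ => rfl⟩
  refine ⟨w, x, νs, hS, ?_, ?_⟩
  · ext s
    rw [hμ, PMF.map, PMF.bind_apply]
    simp only [hw, Function.comp]
  · ext s
    rw [hν, PMF.bind_apply]
    simp only [hw]

theorem lift_bind {ι X Y : Type} {S : X → PMF Y → Prop} (w : PMF ι) (f : ι → PMF X)
    (g : ι → PMF Y) (h : ∀ i, Lift S (f i) (g i)) : Lift S (w.bind f) (w.bind g) := by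
  choose v x νs hS hf hg using fun i => lift_pmf (h i)
  have := lift_of_pmf (S := S) (w.bind fun i => (v i).map fun n => (i, n))
    (fun q => x q.1 q.2) (fun q => νs q.1 q.2) (fun q _ => hS q.1 q.2)
  convert this using 1
  · rw [PMF.map_bind]
    congr 1; funext i
    rw [PMF.map_comp, hf]; rfl
  · rw [PMF.bind_bind]
    congr 1; funext i
    rw [PMF.bind_map, hg]; rfl

theorem lift_map_bind {X Y X' Y' : Type} {S : X → PMF Y → Prop} {S' : X' → PMF Y' → Prop}
    {μ : PMF X} {ν : PMF Y} (f : X → X') (g : Y → PMF Y')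
    (hS : ∀ x ν, S x ν → S' (f x) (ν.bind g)) (h : Lift S μ ν) :
    Lift S' (μ.map f) (ν.bind g) := by
  obtain ⟨w, x, νs, h1, rfl, rfl⟩ := lift_pmf h
  rw [PMF.map_comp, PMF.bind_bind]
  exact lift_of_pmf w _ _ fun i _ => hS _ _ (h1 i)

theorem lift_map {X Y X' Y' : Type} {S : X → PMF Y → Prop} {S' : X' → PMF Y' → Prop}
    {μ : PMF X} {ν : PMF Y} (f : X → X') (g : Y → Y')
    (hS : ∀ x ν, S x ν → S' (f x) (ν.map g)) (h : Lift S μ ν) :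
    Lift S' (μ.map f) (ν.map g) :=
  lift_map_bind f (PMF.pure ∘ g) hS h

theorem lift_diag {X Y Z : Type} {S : X → PMF Y → Prop} (ρ : PMF Z) (f : Z → X) (g : Z → Y)
    (hS : ∀ z, S (f z) (PMF.pure (g z))) : Lift S (ρ.map f) (ρ.map g) :=
  lift_of_pmf ρ f (PMF.pure ∘ g) fun z _ => hS z

theorem lift_pure {X Y : Type} {S : X → PMF Y → Prop} {x : X} {ν : PMF Y} (h : S x ν) :
    Lift S (PMF.pure x) ν := by
  have := lift_of_pmf (S := S) (PMF.pure ()) (fun _ => x) (fun _ => ν) (fun _ _ => h)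
  rwa [PMF.pure_map, PMF.pure_bind] at this

theorem mix_apply {X : Type} (p : ℝ≥0∞) (hp : p ≤ 1) (μ ν : PMF X) (x : X) :
    mix p hp μ ν x = p * μ x + (1 - p) * ν x := rfl

theorem mix_eq {X : Type} (p : ℝ≥0∞) (hp : p ≤ 1) (μ ν : PMF X) :
    mix p hp μ ν = (mix p hp (PMF.pure true) (PMF.pure false)).bind (fun b => cond b μ ν) := by
  ext x
  rw [PMF.bind_apply, tsum_bool]
  simp [mix_apply, add_comm]

theorem lift_mix {X Y : Type} {S : X → PMF Y → Prop} (p : ℝ≥0∞) (hp : p ≤ 1)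
    {μ μ' : PMF X} {ν ν' : PMF Y} (h : Lift S μ ν) (h' : Lift S μ' ν') :
    Lift S (mix p hp μ μ') (mix p hp ν ν') := by
  rw [mix_eq p hp μ, mix_eq p hp ν]
  apply lift_bind
  rintro (_ | _) <;> assumption

theorem lift_step_refl {α σ : Type} (P : PAut α σ) (μ : PMF σ) :
    Lift (step P none) μ μ := by
  have := lift_diag (S := step P none) μ id id fun z => Or.inr ⟨rfl, rfl⟩
  rwa [PMF.map_id] at this

theorem rtg_lift {X Y : Type} {r : X → X → Prop} {q : Y → Y → Prop} (f : X → Y)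
    (h : ∀ a b, r a b → q (f a) (f b)) {a b : X} (hab : Relation.ReflTransGen r a b) :
    Relation.ReflTransGen q (f a) (f b) := by
  induction hab with
  | refl => exact Relation.ReflTransGen.refl
  | tail _ h2 ih => exact ih.tail (h _ _ h2)

/-- `f` preserves transitions with label `a`. -/
def Emb {α σ τ' : Type} (a : Option α) (P : PAut α σ) (Q : PAut α τ') (f : σ → τ') : Prop :=
  ∀ x μ, P.trans x a μ → Q.trans (f x) a (μ.map f)

theorem Emb.lift {α σ τ' : Type} {a : Option α} {P : PAut α σ} {Q : PAut α τ'} {f : σ → τ'}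
    (h : Emb a P Q f) {μ ν : PMF σ} (hl : Lift (step P a) μ ν) :
    Lift (step Q a) (μ.map f) (ν.map f) := by
  refine lift_map f f ?_ hl
  rintro x ν (h1 | ⟨rfl, rfl⟩)
  · exact Or.inl (h _ _ h1)
  · exact Or.inr ⟨rfl, PMF.pure_map _ _⟩

theorem Emb.weakTau {α σ τ' : Type} {P : PAut α σ} {Q : PAut α τ'} {f : σ → τ'}
    (h : Emb none P Q f) {μ ν : PMF σ} (hl : WeakTau P μ ν) :
    WeakTau Q (μ.map f) (ν.map f) :=
  rtg_lift (PMF.map f) (fun _ _ h' => h.lift h') hl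

theorem Emb.weakStep {α σ τ' : Type} {a : Option α} {P : PAut α σ} {Q : PAut α τ'} {f : σ → τ'}
    (h0 : Emb none P Q f) (h : Emb a P Q f) {μ ν : PMF σ} (hl : WeakStep P a μ ν) :
    WeakStep Q a (μ.map f) (ν.map f) := by
  obtain ⟨μ₁, μ₂, h1, h2, h3⟩ := hl
  exact ⟨_, _, h0.weakTau h1, h.lift h2, h0.weakTau h3⟩

theorem WeakStep.single {α σ : Type} {P : PAut α σ} {a : Option α} {μ ν : PMF σ}
    (h : Lift (PCKA.step P a) μ ν) : WeakStep P a μ ν :=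
  ⟨_, _, Relation.ReflTransGen.refl, h, Relation.ReflTransGen.refl⟩

/-- Transfer of simulations along relabelings of the state spaces. -/
theorem sim_transfer {α σ σ' τ τ' : Type} {P : PAut α σ} {P' : PAut α σ'}
    {Q : PAut α τ} {Q' : PAut α τ'} (e : σ' → σ) (e' : σ → σ') (he : ∀ x, e' (e x) = x)
    (f : τ → τ')
    (hPt : ∀ a, Emb a P' P e) (hPi : P'.init.map e = P.init)
    (hPf : ∀ x ∈ P'.final, e x ∈ P.final)
    (hQt : ∀ a, Emb a Q Q' f) (hQi : Q.init.map f = Q'.init)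
    (hQf : ∀ x ∈ Q.final, f x ∈ Q'.final)
    (h : Sim P Q) : Sim P' Q' := by
  obtain ⟨S, hS⟩ := h
  have hl : ∀ μ ν, Lift S (μ.map e) ν →
      Lift (fun x' ν' => ∃ ν, S (e x') ν ∧ ν' = ν.map f) μ (ν.map f) := by
    intro μ ν h
    obtain ⟨w, x, νs, h1, h2, rfl⟩ := lift_pmf h
    have hee : e' ∘ e = id := funext he
    have h3 : μ = w.map (e' ∘ x) := by
      rw [← PMF.map_comp, ← h2, PMF.map_comp, hee, PMF.map_id]
    rw [h3, PMF.map_bind]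
    refine lift_of_pmf w _ _ fun n hn => ⟨νs n, ?_, rfl⟩
    have : x n ∈ (μ.map e).support := by
      rw [h2, PMF.mem_support_map_iff]
      exact ⟨n, hn, rfl⟩
    rw [PMF.mem_support_map_iff] at this
    obtain ⟨z, _, hz⟩ := this
    have : e ((e' ∘ x) n) = x n := by
      simp only [Function.comp, ← hz, he]
    rw [this]
    exact h1 n
  refine ⟨fun x' ν' => ∃ ν, S (e x') ν ∧ ν' = ν.map f, ?_, ?_, ?_⟩
  · obtain ⟨ν0, h1, h2⟩ := hS.init
    refine ⟨ν0.map f, ?_, hl _ _ ?_⟩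
    · rw [← hQi]; exact (hQt none).weakTau h1
    · rwa [hPi]
  · rintro x a μ' ht _ ⟨ν, hν, rfl⟩
    obtain ⟨ν', h1, h2⟩ := hS.step _ _ _ (hPt a _ _ ht) _ hν
    exact ⟨ν'.map f, Emb.weakStep (hQt none) (hQt a) h1, hl _ _ h2⟩
  · rintro x _ hx ⟨ν, hν, rfl⟩
    obtain ⟨ν', h1, h2⟩ := hS.final _ _ (hPf _ hx) hν
    refine ⟨ν'.map f, (hQt none).weakTau h1, ?_⟩
    intro y hy
    rw [PMF.mem_support_map_iff] at hy
    obtain ⟨z, hz, rfl⟩ := hy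
    exact hQf _ (h2 _ hz)

theorem sim_nchoice {α σ₁ σ₂ σ₃ : Type} {P : PAut α σ₁} {Q : PAut α σ₂} (R : PAut α σ₃)
    (h : Sim P Q) : Sim (nchoice P R) (nchoice Q R) := by
  obtain ⟨S, hS⟩ := h
  have emb : ∀ a, Emb a Q (nchoice Q R) (fun x => some (Sum.inl x)) :=
    fun a x μ h => ⟨μ, h, rfl⟩
  let T : Option (σ₁ ⊕ σ₃) → PMF (Option (σ₂ ⊕ σ₃)) → Prop := fun s ν =>
    match s with
    | none => ν = PMF.pure none
    | some (Sum.inl x) => ∃ ν', S x ν' ∧ ν = ν'.map (fun x => some (Sum.inl x))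
    | some (Sum.inr y) => ν = PMF.pure (some (Sum.inr y))
  have liftL : ∀ μ ν, Lift S μ ν → Lift T (μ.map (fun x => some (Sum.inl x)))
      (ν.map (fun x => some (Sum.inl x))) := fun μ ν h =>
    lift_map _ _ (fun x ν h => ⟨ν, h, rfl⟩) h
  have liftR : ∀ ρ : PMF σ₃, Lift T (ρ.map (fun x => some (Sum.inr x)))
      (ρ.map (fun x => some (Sum.inr x))) := fun ρ => lift_diag ρ _ _ fun z => rfl
  refine ⟨T, ?_, ?_, ?_⟩
  · exact ⟨_, Relation.ReflTransGen.refl, lift_pure rfl⟩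
  · rintro (_ | x | y) a μ' ht ν hν
    · obtain rfl : ν = PMF.pure none := hν
      obtain ⟨rfl, rfl | rfl⟩ := ht
      · obtain ⟨ν0, h1, h2⟩ := hS.init
        refine ⟨ν0.map (fun x => some (Sum.inl x)), ?_, liftL _ _ h2⟩
        exact ⟨_, Q.init.map (fun x => some (Sum.inl x)), Relation.ReflTransGen.refl,
          lift_pure (Or.inl ⟨rfl, Or.inl rfl⟩), (emb none).weakTau h1⟩
      · exact ⟨_, WeakStep.single (lift_pure (Or.inl ⟨rfl, Or.inr rfl⟩)), liftR _⟩
    · obtain ⟨ν, hν, rfl⟩ := hν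
      obtain ⟨μ, ht, rfl⟩ := ht
      obtain ⟨ν', h1, h2⟩ := hS.step _ _ _ ht _ hν
      exact ⟨_, Emb.weakStep (emb none) (emb a) h1, liftL _ _ h2⟩
    · obtain rfl : ν = PMF.pure (some (Sum.inr y)) := hν
      obtain ⟨μ, ht, rfl⟩ := ht
      exact ⟨_, WeakStep.single (lift_pure (Or.inl ⟨_, ht, rfl⟩)), liftR _⟩
  · rintro s ν (⟨x, hx, rfl⟩ | ⟨y, hy, rfl⟩) hν
    · obtain ⟨ν, hν, rfl⟩ := hν
      obtain ⟨ν', h1, h2⟩ := hS.final _ _ hx hν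
      refine ⟨_, (emb none).weakTau h1, ?_⟩
      intro y hy
      rw [PMF.mem_support_map_iff] at hy
      obtain ⟨z, hz, rfl⟩ := hy
      exact Or.inl ⟨z, h2 _ hz, rfl⟩
    · obtain rfl : ν = PMF.pure (some (Sum.inr y)) := hν
      refine ⟨_, Relation.ReflTransGen.refl, ?_⟩
      intro z hz
      rw [PMF.mem_support_pure_iff] at hz
      exact Or.inr ⟨y, hy, hz⟩

theorem sim_pchoice {α σ₁ σ₂ σ₃ : Type} {P : PAut α σ₁} {Q : PAut α σ₂} (R : PAut α σ₃)
    (p : ℝ≥0∞) (hp : p ≤ 1)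
    (h : Sim P Q) : Sim (pchoice p hp P R) (pchoice p hp Q R) := by
  obtain ⟨S, hS⟩ := h
  have emb : ∀ a, Emb a Q (pchoice p hp Q R) Sum.inl :=
    fun a x μ h => ⟨μ, h, rfl⟩
  let T : (σ₁ ⊕ σ₃) → PMF (σ₂ ⊕ σ₃) → Prop := fun s ν =>
    match s with
    | Sum.inl x => ∃ ν', S x ν' ∧ ν = ν'.map Sum.inl
    | Sum.inr y => ν = PMF.pure (Sum.inr y)
  have liftL : ∀ μ ν, Lift S μ ν → Lift T (μ.map Sum.inl) (ν.map Sum.inl) := fun μ ν h =>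
    lift_map _ _ (fun x ν h => ⟨ν, h, rfl⟩) h
  have liftR : ∀ ρ : PMF σ₃, Lift T (ρ.map Sum.inr) (ρ.map Sum.inr) :=
    fun ρ => lift_diag ρ _ _ fun z => rfl
  refine ⟨T, ?_, ?_, ?_⟩
  · obtain ⟨ν0, h1, h2⟩ := hS.init
    refine ⟨mix p hp (ν0.map Sum.inl) (R.init.map Sum.inr), ?_, lift_mix p hp (liftL _ _ h2)
      (liftR _)⟩
    exact rtg_lift (fun μ => mix p hp (μ.map Sum.inl) (R.init.map Sum.inr))
      (fun _ _ h => lift_mix p hp ((emb none).lift h) (lift_step_refl _ _)) h1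
  · rintro (x | y) a μ' ht ν hν
    · obtain ⟨ν, hν, rfl⟩ := hν
      obtain ⟨μ, ht, rfl⟩ := ht
      obtain ⟨ν', h1, h2⟩ := hS.step _ _ _ ht _ hν
      exact ⟨_, Emb.weakStep (emb none) (emb a) h1, liftL _ _ h2⟩
    · obtain rfl : ν = PMF.pure (Sum.inr y) := hν
      obtain ⟨μ, ht, rfl⟩ := ht
      exact ⟨_, WeakStep.single (lift_pure (Or.inl ⟨_, ht, rfl⟩)), liftR _⟩
  · rintro s ν (⟨x, hx, rfl⟩ | ⟨y, hy, rfl⟩) hν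
    · obtain ⟨ν, hν, rfl⟩ := hν
      obtain ⟨ν', h1, h2⟩ := hS.final _ _ hx hν
      refine ⟨_, (emb none).weakTau h1, ?_⟩
      intro y hy
      rw [PMF.mem_support_map_iff] at hy
      obtain ⟨z, hz, rfl⟩ := hy
      exact Or.inl ⟨z, h2 _ hz, rfl⟩
    · obtain rfl : ν = PMF.pure (Sum.inr y) := hν
      refine ⟨_, Relation.ReflTransGen.refl, ?_⟩
      intro z hz
      rw [PMF.mem_support_pure_iff] at hz
      exact Or.inr ⟨y, hy, hz⟩

theorem pprod_comm {X Y : Type} (μ : PMF X) (ν : PMF Y) :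
    pprod μ ν = ν.bind fun y => μ.map fun x => (x, y) := by
  unfold pprod PMF.map
  rw [PMF.bind_comm]
  rfl

theorem pprod_swap {X Y : Type} (μ : PMF X) (ν : PMF Y) :
    (pprod μ ν).map Prod.swap = pprod ν μ := by
  rw [pprod_comm ν μ]
  unfold pprod
  rw [PMF.map_bind]
  congr 1; funext x
  rw [PMF.map_comp]; rfl

theorem pprod_pure {X Y : Type} (μ : PMF X) (y : Y) :
    pprod μ (PMF.pure y) = μ.map fun x => (x, y) := by
  rw [pprod_comm, PMF.pure_bind]

theorem pure_pprod {X Y : Type} (x : X) (ν : PMF Y) :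
    pprod (PMF.pure x) ν = ν.map fun y => (x, y) := by
  unfold pprod
  rw [PMF.pure_bind]

theorem sim_par {α σ₁ σ₂ σ₃ : Type} {P : PAut α σ₁} {Q : PAut α σ₂} (R : PAut α σ₃)
    (A : Set α) (h : Sim P Q) : Sim (par A P R) (par A Q R) := by
  obtain ⟨S, hS⟩ := h
  have emb : ∀ a, (∀ b ∈ A, a ≠ some b) → ∀ y, Emb a Q (par A Q R) (fun x => (x, y)) :=
    fun a ha y x μ h => ⟨μ, PMF.pure y, (pprod_pure _ _).symm, Or.inr (Or.inl ⟨ha, h, rfl⟩)⟩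
  have emb0 := emb none (fun b _ => by simp)
  let T : (σ₁ × σ₃) → PMF (σ₂ × σ₃) → Prop := fun s ν =>
    ∃ ν', S s.1 ν' ∧ ν = ν'.map (fun x => (x, s.2))
  have liftT : ∀ μ ν ρ, Lift S μ ν → Lift T (pprod μ ρ) (pprod ν ρ) := by
    intro μ ν ρ h
    rw [pprod_comm, pprod_comm]
    exact lift_bind _ _ _ fun y => lift_map _ _ (fun x ν h => ⟨ν, h, rfl⟩) h
  have tau : ∀ μ ν ρ, WeakTau Q μ ν → WeakTau (par A Q R) (pprod μ ρ) (pprod ν ρ) := by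
    intro μ ν ρ h
    refine rtg_lift (fun μ => pprod μ ρ) (fun μ ν h => ?_) h
    rw [pprod_comm, pprod_comm]
    exact lift_bind _ _ _ fun y => (emb0 y).lift h
  refine ⟨T, ?_, ?_, ?_⟩
  · obtain ⟨ν0, h1, h2⟩ := hS.init
    exact ⟨pprod ν0 R.init, tau _ _ _ h1, liftT _ _ _ h2⟩
  · rintro ⟨x, y⟩ a _ ⟨μ, ρ, rfl, ht⟩ _ ⟨ν, hν, rfl⟩
    rcases ht with ⟨b, hb, rfl, hP, hR⟩ | ⟨ha, hP, hR⟩ | ⟨ha, hR, hP⟩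
    · obtain ⟨ν', ⟨ν₁, ν₂, h1, h2, h3⟩, h4⟩ := hS.step _ _ _ hP _ hν
      refine ⟨pprod ν' ρ, ⟨_, pprod ν₂ ρ, (emb0 y).weakTau h1, ?_, tau _ _ _ h3⟩,
        liftT _ _ _ h4⟩
      refine lift_map_bind _ _ ?_ h2
      rintro z ξ (hz | ⟨hz, _⟩)
      · exact Or.inl ⟨ξ, ρ, rfl, Or.inl ⟨b, hb, rfl, hz, hR⟩⟩
      · cases hz
    · obtain rfl : ρ = PMF.pure y := hR
      obtain ⟨ν', h1, h2⟩ := hS.step _ _ _ hP _ hν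
      refine ⟨pprod ν' (PMF.pure y), ?_, liftT _ _ _ h2⟩
      rw [pprod_pure]
      exact Emb.weakStep (emb0 y) (emb a ha y) h1
    · obtain rfl : μ = PMF.pure x := hP
      refine ⟨pprod ν ρ, ?_, liftT _ _ _ (lift_pure hν)⟩
      refine WeakStep.single (lift_of_pmf ν _ _ fun z _ => Or.inl ?_)
      exact ⟨PMF.pure z, ρ, (pure_pprod _ _).symm, Or.inr (Or.inr ⟨ha, hR, rfl⟩)⟩
  · rintro ⟨x, y⟩ _ ⟨hx, hy⟩ ⟨ν, hν, rfl⟩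
    obtain ⟨ν', h1, h2⟩ := hS.final _ _ hx hν
    refine ⟨_, (emb0 y).weakTau h1, ?_⟩
    intro w hw
    rw [PMF.mem_support_map_iff] at hw
    obtain ⟨z, hz, rfl⟩ := hw
    exact ⟨h2 _ hz, hy⟩

theorem emb_par_swap {α σ τ' : Type} (A : Set α) (P : PAut α σ) (R : PAut α τ') (a : Option α) :
    Emb a (par A P R) (par A R P) Prod.swap := by
  rintro ⟨x, y⟩ _ ⟨μ, ν, rfl, h⟩
  refine ⟨ν, μ, pprod_swap _ _, ?_⟩
  rcases h with ⟨b, hb, h1, h2, h3⟩ | h | h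
  · exact Or.inl ⟨b, hb, h1, h3, h2⟩
  · exact Or.inr (Or.inr h)
  · exact Or.inr (Or.inl h)

theorem emb_nchoice_swap {α σ τ' : Type} (P : PAut α σ) (R : PAut α τ') (a : Option α) :
    Emb a (nchoice P R) (nchoice R P) (Option.map Sum.swap) := by
  rintro (_ | x | y) μ h
  · obtain ⟨rfl, rfl | rfl⟩ := h
    · exact ⟨rfl, Or.inr (PMF.map_comp _ _ _)⟩
    · exact ⟨rfl, Or.inl (PMF.map_comp _ _ _)⟩
  · obtain ⟨μ, h, rfl⟩ := h
    exact ⟨μ, h, PMF.map_comp _ _ _⟩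
  · obtain ⟨μ, h, rfl⟩ := h
    exact ⟨μ, h, PMF.map_comp _ _ _⟩

theorem nchoice_final_swap {α σ τ' : Type} (P : PAut α σ) (R : PAut α τ') :
    ∀ x ∈ (nchoice P R).final, Option.map Sum.swap x ∈ (nchoice R P).final := by
  rintro _ (⟨x, hx, rfl⟩ | ⟨x, hx, rfl⟩)
  · exact Or.inr ⟨x, hx, rfl⟩
  · exact Or.inl ⟨x, hx, rfl⟩

theorem emb_pchoice_swap {α σ τ' : Type} (p q : ℝ≥0∞) (hp : p ≤ 1) (hq : q ≤ 1)
    (P : PAut α σ) (R : PAut α τ') (a : Option α) :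
    Emb a (pchoice p hp P R) (pchoice q hq R P) Sum.swap := by
  rintro (x | y) μ h
  · obtain ⟨μ, h, rfl⟩ := h
    exact ⟨μ, h, PMF.map_comp _ _ _⟩
  · obtain ⟨μ, h, rfl⟩ := h
    exact ⟨μ, h, PMF.map_comp _ _ _⟩

theorem pchoice_final_swap {α σ τ' : Type} (p q : ℝ≥0∞) (hp : p ≤ 1) (hq : q ≤ 1)
    (P : PAut α σ) (R : PAut α τ') :
    ∀ x ∈ (pchoice p hp P R).final, Sum.swap x ∈ (pchoice q hq R P).final := by
  rintro _ (⟨x, hx, rfl⟩ | ⟨x, hx, rfl⟩)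
  · exact Or.inr ⟨x, hx, rfl⟩
  · exact Or.inl ⟨x, hx, rfl⟩

theorem mix_map {X Y : Type} (p : ℝ≥0∞) (hp : p ≤ 1) (μ ν : PMF X) (f : X → Y) :
    (mix p hp μ ν).map f = mix p hp (μ.map f) (ν.map f) := by
  rw [mix_eq p hp μ, mix_eq p hp (μ.map f), PMF.map_bind]
  congr 1; funext b
  cases b <;> rfl

theorem mix_symm {X : Type} (p q : ℝ≥0∞) (hp : p ≤ 1) (hq : q ≤ 1) (hpq : p = 1 - q)
    (hqp : q = 1 - p) (μ ν : PMF X) : mix p hp μ ν = mix q hq ν μ := by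
  ext x
  change p * μ x + (1 - p) * ν x = q * ν x + (1 - q) * μ x
  rw [← hpq, ← hqp, add_comm]

theorem pchoice_init_swap {α σ τ' : Type} (p q : ℝ≥0∞) (hp : p ≤ 1) (hq : q ≤ 1)
    (hpq : p = 1 - q) (hqp : q = 1 - p) (P : PAut α σ) (R : PAut α τ') :
    (pchoice p hp P R).init.map Sum.swap = (pchoice q hq R P).init := by
  change (mix p hp _ _).map _ = mix q hq _ _
  rw [mix_map, PMF.map_comp, PMF.map_comp, mix_symm p q hp hq hpq hqp]
  rfl

/-- simulation is a precongruence for nondeterministic choice,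
probabilistic choice and parallel composition (in both argument orders). -/
theorem sim_precongruence_choices_par {α σ₁ σ₂ σ₃ : Type}
    (P : PAut α σ₁) (Q : PAut α σ₂) (R : PAut α σ₃) (h : Sim P Q) :
    (Sim (nchoice P R) (nchoice Q R) ∧ Sim (nchoice R P) (nchoice R Q)) ∧
    (∀ (p : ℝ≥0∞) (hp : p ≤ 1),
      Sim (pchoice p hp P R) (pchoice p hp Q R) ∧
      Sim (pchoice p hp R P) (pchoice p hp R Q)) ∧
    (∀ (E A : Set α), A ⊆ E →
      Sim (par A P R) (par A Q R) ∧ Sim (par A R P) (par A R Q)) := by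
  refine ⟨⟨sim_nchoice R h, ?_⟩, fun p hp => ⟨sim_pchoice R p hp h, ?_⟩,
    fun E A _ => ⟨sim_par R A h, ?_⟩⟩
  · refine sim_transfer (Option.map Sum.swap) (Option.map Sum.swap) ?_ (Option.map Sum.swap)
      (emb_nchoice_swap R P) (PMF.pure_map _ _) (nchoice_final_swap R P)
      (emb_nchoice_swap Q R) (PMF.pure_map _ _) (nchoice_final_swap Q R) (sim_nchoice R h)
    rintro (_ | _ | _) <;> rfl
  · have hq : 1 - p ≤ 1 := tsub_le_self
    have hpq : p = 1 - (1 - p) := (ENNReal.sub_sub_cancel ENNReal.one_ne_top hp).symm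
    refine sim_transfer Sum.swap Sum.swap Sum.swap_swap Sum.swap
      (emb_pchoice_swap p (1 - p) hp hq R P) (pchoice_init_swap p (1 - p) hp hq hpq rfl R P)
      (pchoice_final_swap p (1 - p) hp hq R P)
      (emb_pchoice_swap (1 - p) p hq hp Q R) (pchoice_init_swap (1 - p) p hq hp rfl hpq Q R)
      (pchoice_final_swap (1 - p) p hq hp Q R) (sim_pchoice R (1 - p) hq h)
  · exact sim_transfer Prod.swap Prod.swap Prod.swap_swap Prod.swap
      (emb_par_swap A R P) (pprod_swap _ _) (fun _ hx => ⟨hx.2, hx.1⟩)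
      (emb_par_swap A Q R) (pprod_swap _ _) (fun _ hx => ⟨hx.2, hx.1⟩) (sim_par R A h)

end PCKA
end

section
/- Sequential composition of probabilistic automata is associative up to simulation equivalence: for probabilistic automata P, Q, R with pairwise disjoint state spaces, P · (Q · R) ≡ (P · Q) · R. -/
open scoped ENNReal

namespace PCKA

/-- Countable enumeration of a distribution. -/
theorem exists_enum {X : Type} (μ : PMF X) :
    ∃ (p : ℕ → ℝ≥0∞) (x : ℕ → X),
      ∀ h : X → ℝ≥0∞, (∑' n, p n * h (x n)) = ∑' s, μ s * h s := by
  classical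
  obtain ⟨x₀, hx₀⟩ := μ.support_nonempty
  have : Countable μ.support := μ.support_countable.to_subtype
  have : Nonempty μ.support := ⟨⟨x₀, hx₀⟩⟩
  obtain ⟨e, he⟩ := exists_injective_nat μ.support
  obtain ⟨g, hl⟩ : ∃ g : ℕ → μ.support, Function.LeftInverse g e :=
    ⟨Function.invFun e, Function.leftInverse_invFun he⟩
  refine ⟨fun n => if n ∈ Set.range e then μ (g n).1 else 0,
    fun n => (g n).1, fun h => ?_⟩
  have h1 : (∑' s, μ s * h s) = ∑' s : μ.support, μ s * h s := by
    refine (tsum_subtype_eq_of_support_subset ?_).symm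
    intro s hs
    rw [Function.mem_support] at hs
    exact fun h0 => hs (by simp [h0])
  rw [h1, ← he.tsum_eq]
  · refine tsum_congr fun s => ?_
    simp [hl s]
  · intro n hn
    by_contra hc
    rw [Function.mem_support] at hn
    exact hn (by beta_reduce; rw [if_neg hc, zero_mul])

theorem lift_map_s7 {X Y : Type} (f : X → Y) (μ : PMF X) :
    Lift (fun x ν => ν = PMF.pure (f x)) μ (μ.map f) := by
  classical
  obtain ⟨p, x, hp⟩ := exists_enum μ
  refine ⟨p, x, fun n => PMF.pure (f (x n)), ?_, ?_, fun n => rfl, ?_⟩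
  · have := hp (fun _ => 1)
    simpa [μ.tsum_coe] using this
  · intro s
    rw [hp (fun z => PMF.pure z s)]
    have := congrArg (fun ν : PMF X => ν s) (PMF.bind_pure μ)
    simp only [PMF.bind_apply] at this
    exact this.symm
  · intro t
    rw [hp (fun z => PMF.pure (f z) t)]
    have := congrArg (fun ν : PMF Y => ν t) (PMF.bind_pure_comp f μ)
    simp only [PMF.bind_apply] at this
    exact this.symm

/-- A state map preserving all the structure gives a simulation. -/
theorem sim_of_map {α σ τ' : Type} (P : PAut α σ) (Q : PAut α τ') (f : σ → τ')
    (hi : Q.init = P.init.map f)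
    (ht : ∀ x a μ, P.trans x a μ → Q.trans (f x) a (μ.map f))
    (hf : ∀ x ∈ P.final, f x ∈ Q.final) : Sim P Q := by
  refine ⟨fun x ν => ν = PMF.pure (f x), ?_, ?_, ?_⟩
  · exact ⟨_, Relation.ReflTransGen.refl, hi ▸ lift_map_s7 f P.init⟩
  · rintro x a μ' h ν rfl
    exact ⟨μ'.map f, ⟨_, _, Relation.ReflTransGen.refl, lift_pure (Or.inl (ht x a μ' h)),
      Relation.ReflTransGen.refl⟩, lift_map_s7 f μ'⟩
  · rintro x ν hx rfl
    refine ⟨_, Relation.ReflTransGen.refl, ?_⟩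
    intro y hy
    rw [PMF.support_pure, Set.mem_singleton_iff] at hy
    exact hy ▸ hf x hx

/-- sequential composition is associative up to simulation
equivalence: `P · (Q · R) ≡ (P · Q) · R`. -/
theorem seq_assoc {α σ₁ σ₂ σ₃ : Type}
    (P : PAut α σ₁) (Q : PAut α σ₂) (R : PAut α σ₃) :
    SimEquiv (pseq P (pseq Q R)) (pseq (pseq P Q) R) := by
  constructor
  · refine sim_of_map _ _ (Equiv.sumAssoc σ₁ σ₂ σ₃).symm ?_ ?_ ?_
    · simp only [pseq, PMF.map_comp]; rfl
    · rintro (x | y | z) a μ h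
      · rcases h with ⟨μ', h, rfl⟩ | ⟨ha, hx, rfl⟩
        · refine Or.inl ⟨_, Or.inl ⟨μ', h, rfl⟩, ?_⟩
          simp only [PMF.map_comp]; rfl
        · refine Or.inl ⟨_, Or.inr ⟨ha, hx, rfl⟩, ?_⟩
          simp only [pseq, PMF.map_comp]; rfl
      · obtain ⟨ν, h | ⟨ha, hy, rfl⟩, rfl⟩ := h
        · obtain ⟨μ', h, rfl⟩ := h
          refine Or.inl ⟨_, ⟨μ', h, rfl⟩, ?_⟩
          simp only [PMF.map_comp]; rfl
        · refine Or.inr ⟨ha, ⟨y, hy, rfl⟩, ?_⟩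
          simp only [PMF.map_comp]; rfl
      · obtain ⟨ν, ⟨μ', h, rfl⟩, rfl⟩ := h
        refine ⟨μ', h, ?_⟩
        simp only [PMF.map_comp]; rfl
    · rintro _ ⟨_, ⟨z, hz, rfl⟩, rfl⟩
      exact ⟨z, hz, rfl⟩
  · refine sim_of_map _ _ (Equiv.sumAssoc σ₁ σ₂ σ₃) ?_ ?_ ?_
    · simp only [pseq, PMF.map_comp]; rfl
    · rintro ((x | y) | z) a μ h
      · rcases h with ⟨_, ⟨μ', h, rfl⟩ | ⟨ha, hx, rfl⟩, rfl⟩ | ⟨ha, ⟨_, _, h⟩, rfl⟩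
        · refine Or.inl ⟨μ', h, ?_⟩
          simp only [PMF.map_comp]; rfl
        · refine Or.inr ⟨ha, hx, ?_⟩
          simp only [pseq, PMF.map_comp]; rfl
        · cases h
      · rcases h with ⟨_, ⟨μ', h, rfl⟩, rfl⟩ | ⟨ha, ⟨y', hy, h⟩, rfl⟩
        · refine ⟨_, Or.inl ⟨μ', h, rfl⟩, ?_⟩
          simp only [PMF.map_comp]; rfl
        · cases h
          refine ⟨_, Or.inr ⟨ha, hy, rfl⟩, ?_⟩
          simp only [PMF.map_comp]; rfl
      · obtain ⟨μ', h, rfl⟩ := h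
        refine ⟨_, ⟨μ', h, rfl⟩, ?_⟩
        simp only [PMF.map_comp]; rfl
    · rintro _ ⟨z, hz, rfl⟩
      exact ⟨_, ⟨z, hz, rfl⟩, rfl⟩

end PCKA
end
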